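/- For every integer r ≥ 1 there exists a homogeneous polynomial H_r with integer coefficients in n² indeterminates Z_{ij} (1 ≤ i,j ≤ n), of degree n·r^n·(r−1)/2, with the following property: for every commutative ring R, every family of pairwise commuting derivations D₁,…,Dₙ ∈ Der(R) (i.e. [Dᵢ,Dⱼ] = 0 for all i,j), and every F = (f₁,…,fₙ) ∈ R^n, one has det W = H_r(JF), where W is the r^n × r^n matrix indexed by multiindices α,β ∈ [0,r−1]^n with entries W_{αβ} = D^α F^β, and JF is the n × n matrix with entries (JF)_{ij} = Dᵢ fⱼ. -/

import Mathlib

open MvPolynomial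

namespace GW

/-- Flattened list of indices of a multiindex. -/
def lst {n r : ℕ} (α : Fin n → Fin r) : List (Fin n) :=
  (List.ofFn fun i => List.replicate (α i : ℕ) i).flatten

def deg {n r : ℕ} (α : Fin n → Fin r) : ℕ := ∑ i, (α i : ℕ)

lemma lst_length {n r : ℕ} (α : Fin n → Fin r) : (lst α).length = deg α := by
  simp [lst, deg, List.length_flatten, List.map_ofFn, Function.comp_def, List.sum_ofFn]

lemma foldr_comp_eq {ι A : Type*} (D : ι → A → A) (a : ι → ℕ) (L : List ι) (x : A) :
    (L.map fun i => (D i)^[a i]).foldr (· ∘ ·) id x =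
      ((L.map fun i => List.replicate (a i) i).flatten).foldr D x := by
  induction L with
  | nil => simp
  | cons i L ih =>
    simp only [List.map_cons, List.foldr_cons, Function.comp_apply, ih, List.flatten_cons,
      List.foldr_append]
    generalize List.foldr D x _ = y
    generalize a i = k
    induction k with
    | zero => simp
    | succ k ihk => rw [Function.iterate_succ_apply', ihk]; simp [List.replicate_succ]

lemma op_eq {n r : ℕ} {A : Type*} (D : Fin n → A → A) (α : Fin n → Fin r) (x : A) :
    (List.ofFn fun i : Fin n => (D i)^[(α i : ℕ)]).foldr (· ∘ ·) id x = (lst α).foldr D x := by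
  have := foldr_comp_eq D (fun i => (α i : ℕ)) (List.finRange n) x
  simpa [lst, List.ofFn_eq_map] using this

/-- Coefficientwise extension of an additive map. -/
noncomputable def mapL {R : Type*} [CommRing R] {n : ℕ} (D : Derivation ℤ R R) :
    MvPolynomial (Fin n) R →+ MvPolynomial (Fin n) R where
  toFun p := AddMonoidAlgebra.map (D : R →+ R) p
  map_zero' := by
    ext m
    rw [coeff_addMonoidAlgebraMap]
    simp
  map_add' p q := by
    ext m
    simp only [coeff_addMonoidAlgebraMap, coeff_add, map_add]

lemma mapL_monomial {R : Type*} [CommRing R] {n : ℕ} (D : Derivation ℤ R R) (m : Fin n →₀ ℕ)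
    (a : R) : mapL D (monomial m a) = monomial m (D a) := by
  ext k
  refine (coeff_addMonoidAlgebraMap (D : R →+ R) _ _).trans ?_
  rw [coeff_monomial, coeff_monomial]
  split_ifs
  · rfl
  · exact map_zero _

/-- Coefficientwise extension of a derivation. -/
noncomputable def dS {R : Type*} [CommRing R] {n : ℕ} (D : Derivation ℤ R R) :
    Derivation ℤ (MvPolynomial (Fin n) R) (MvPolynomial (Fin n) R) :=
  Derivation.mk' (mapL D).toIntLinearMap
    (by
      intro p q
      change mapL D (p * q) = p • mapL D q + q • mapL D p
      induction p using MvPolynomial.induction_on' with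
      | add p p' h h' => rw [add_mul, map_add, h, h', map_add, add_smul, smul_add]; abel
      | monomial m a =>
      induction q using MvPolynomial.induction_on' with
      | add p p' h h' => rw [mul_add, map_add, h, h', map_add, add_smul, smul_add]; abel
      | monomial k b =>
      simp only [monomial_mul, mapL_monomial, smul_eq_mul, Derivation.leibniz, map_add]
      rw [add_comm k m])

lemma dS_C {R : Type*} [CommRing R] {n : ℕ} (D : Derivation ℤ R R) (a : R) :
    dS (n := n) D (C a) = C (D a) := mapL_monomial D 0 a

lemma dS_X {R : Type*} [CommRing R] {n : ℕ} (D : Derivation ℤ R R) (j : Fin n) :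
    dS (n := n) D (X j) = 0 := by
  refine (mapL_monomial D _ 1).trans ?_
  simp

lemma der_pow {A : Type*} [CommRing A] (d : Derivation ℤ A A) (I : Ideal A) (m : ℕ) :
    ∀ u ∈ I ^ (m + 1), d u ∈ I ^ m := by
  induction m with
  | zero => simp
  | succ m ih =>
    intro u hu
    rw [pow_succ] at hu
    refine Submodule.mul_induction_on hu ?_ ?_
    · intro a ha b hb
      rw [Derivation.leibniz, smul_eq_mul, smul_eq_mul]
      refine add_mem (Ideal.mul_mem_right _ _ ha) ?_
      rw [mul_comm, pow_succ]
      exact Ideal.mul_mem_mul (ih a ha) hb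
    · intro x y hx hy
      rw [map_add]; exact add_mem hx hy

abbrev ZR (n : ℕ) := MvPolynomial (Fin n × Fin n) ℤ
abbrev TR (n : ℕ) := MvPolynomial (Fin n) (ZR n)

noncomputable def E {n : ℕ} (i : Fin n) : Derivation ℤ (TR n) (TR n) :=
  (mkDerivation (ZR n) (fun j => C (X (i, j)))).restrictScalars ℤ

lemma E_X {n : ℕ} (i j : Fin n) : E i (X j) = C (X (i, j)) := by
  simp [E, mkDerivation_X]

lemma E_C {n : ℕ} (i : Fin n) (z : ZR n) : E i (C z) = 0 :=
  derivation_C _ _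

lemma mkD_eq {n : ℕ} {K : Type*} [CommRing K] (f : Fin n → MvPolynomial (Fin n) K)
    (h : MvPolynomial (Fin n) K) : mkDerivation K f h = ∑ j, f j * pderiv j h := by
  induction h using MvPolynomial.induction_on with
  | C z => simp
  | add p q hp hq => simp only [map_add, hp, hq, mul_add, Finset.sum_add_distrib]
  | mul_X p k hp =>
    have h1 : ∑ j, f j * (p * pderiv j (X k)) = p * f k := by
      rw [Finset.sum_eq_single k]
      · rw [pderiv_X_self]; ring
      · intro b _ hb
        rw [pderiv_X_of_ne hb.symm]; simp
      · simp
    rw [Derivation.leibniz, hp, mkDerivation_X, smul_eq_mul, smul_eq_mul]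
    simp only [pderiv_mul, mul_add, Finset.sum_add_distrib]
    rw [h1, Finset.mul_sum, add_comm]
    congr 1
    exact Finset.sum_congr rfl fun j _ => by ring

lemma E_eq {n : ℕ} (i : Fin n) (h : TR n) : E i h = ∑ j, C (X (i, j)) * pderiv j h :=
  mkD_eq _ _

lemma E_homog {n : ℕ} (b : Fin n →₀ ℕ) (l : List (Fin n)) :
    ∀ m, (coeff m (l.foldr (fun i => ⇑(E i)) (monomial b 1 : TR n))).IsHomogeneous l.length := by
  induction l with
  | nil =>
    intro m
    simp only [List.foldr_nil, coeff_monomial, List.length_nil]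
    split_ifs
    · exact isHomogeneous_one _ _
    · exact isHomogeneous_zero _ _ _
  | cons i l ih =>
    intro m
    rw [List.foldr_cons, E_eq, coeff_sum]
    refine IsHomogeneous.sum _ _ _ fun j _ => ?_
    rw [coeff_C_mul, coeff_pderiv, List.length_cons, add_comm l.length 1]
    refine (isHomogeneous_X ℤ (i, j)).mul ?_
    have h0 : ((m j : ZR n) + 1).IsHomogeneous 0 := by
      have := isHomogeneous_C (Fin n × Fin n) ((m j : ℤ) + 1)
      simpa using this
    simpa using (ih (m + Finsupp.single j 1)).mul h0

section main
variable {n : ℕ} {R : Type*} [CommRing R] (D : Fin n → Derivation ℤ R R) (F : Fin n → R)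

noncomputable def G (j : Fin n) : MvPolynomial (Fin n) R := C (F j) - X j

noncomputable def I : Ideal (MvPolynomial (Fin n) R) := Ideal.span (Set.range (G F))

noncomputable def J : Ideal (TR n) := Ideal.span (Set.range X)

noncomputable def ev0 : ZR n →+* R :=
  (aeval (fun ij : Fin n × Fin n => D ij.1 (F ij.2)) : ZR n →ₐ[ℤ] R).toRingHom

noncomputable def θ : TR n →+* MvPolynomial (Fin n) R :=
  eval₂Hom (C.comp (ev0 D F)) (G F)

lemma θ_X (j : Fin n) : θ D F (X j) = G F j := by simp [θ]

lemma θ_C (z : ZR n) : θ D F (C z) = C (ev0 D F z) := by simp [θ]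

lemma θ_J : J.map (θ D F) ≤ I F := by
  rw [J, Ideal.map_span, Ideal.span_le]
  rintro _ ⟨_, ⟨j, rfl⟩, rfl⟩
  rw [θ_X]
  exact Ideal.subset_span ⟨j, rfl⟩

lemma θ_Jpow (m : ℕ) (h : TR n) (hh : h ∈ J ^ m) : θ D F h ∈ I F ^ m := by
  have := Ideal.mem_map_of_mem (θ D F) hh
  rw [Ideal.map_pow] at this
  exact Ideal.pow_right_mono (θ_J D F) m this

lemma δ_X (i j : Fin n) : dS (D i) (θ D F (X j)) - θ D F (E i (X j)) = 0 := by
  rw [θ_X, E_X, θ_C, G, map_sub, dS_C, dS_X]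
  simp [ev0]

lemma δ_mul (i : Fin n) (a b : TR n) :
    dS (D i) (θ D F (a * b)) - θ D F (E i (a * b)) =
      θ D F a * (dS (D i) (θ D F b) - θ D F (E i b)) +
      (dS (D i) (θ D F a) - θ D F (E i a)) * θ D F b := by
  simp only [map_mul, Derivation.leibniz, smul_eq_mul, map_add]
  ring

lemma lemB (i : Fin n) (m : ℕ) : ∀ h ∈ (J : Ideal (TR n)) ^ m,
    dS (D i) (θ D F h) - θ D F (E i h) ∈ I F ^ m := by
  have h1 : ∀ h ∈ (J : Ideal (TR n)), dS (D i) (θ D F h) - θ D F (E i h) ∈ I F := by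
    intro h hh
    refine Submodule.span_induction ?_ ?_ ?_ ?_ hh
    · rintro _ ⟨j, rfl⟩
      rw [δ_X]; exact zero_mem _
    · simp
    · intro x y _ _ hx hy
      have : dS (D i) (θ D F (x + y)) - θ D F (E i (x + y)) =
        (dS (D i) (θ D F x) - θ D F (E i x)) + (dS (D i) (θ D F y) - θ D F (E i y)) := by
        simp only [map_add]; ring
      rw [this]; exact add_mem hx hy
    · intro a x hx' hx
      rw [smul_eq_mul, δ_mul]
      refine add_mem (Ideal.mul_mem_left _ _ hx) (Ideal.mul_mem_left _ _ ?_)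
      have := θ_Jpow D F 1 x (by rw [pow_one]; exact hx')
      simpa using this
  induction m with
  | zero => simp
  | succ m ih =>
    intro u hu
    rw [pow_succ] at hu
    refine Submodule.mul_induction_on hu ?_ ?_
    · intro a ha b hb
      rw [δ_mul, pow_succ]
      refine add_mem (Ideal.mul_mem_mul (θ_Jpow D F m a ha) (h1 b hb))
        (Ideal.mul_mem_mul (ih a ha) ?_)
      have := θ_Jpow D F 1 b (by rw [pow_one]; exact hb)
      simpa using this
    · intro x y hx hy
      have : dS (D i) (θ D F (x + y)) - θ D F (E i (x + y)) =
        (dS (D i) (θ D F x) - θ D F (E i x)) + (dS (D i) (θ D F y) - θ D F (E i y)) := by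
        simp only [map_add]; ring
      rw [this]; exact add_mem hx hy

lemma lemC (m : ℕ) (p : TR n) (hp : p ∈ (J : Ideal (TR n)) ^ m) (l : List (Fin n)) :
    ∀ k, k + l.length = m →
      l.foldr (fun i => ⇑(dS (D i))) (θ D F p) - θ D F (l.foldr (fun i => ⇑(E i)) p)
        ∈ I F ^ (k + 1) ∧ l.foldr (fun i => ⇑(E i)) p ∈ (J : Ideal (TR n)) ^ k := by
  induction l with
  | nil =>
    rintro k rfl
    simpa using hp
  | cons i l ih =>
    intro k hk
    obtain ⟨h1, h2⟩ := ih (k + 1) (by simp at hk; omega)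
    simp only [List.foldr_cons]
    refine ⟨?_, der_pow _ _ _ _ h2⟩
    have e1 := der_pow (dS (D i)) _ _ _ h1
    have e2 := lemB D F i _ _ h2
    have e3 := add_mem e1 e2
    generalize List.foldr (fun i => ⇑(dS (D i))) ((θ D F) p) l = A at *
    generalize List.foldr (fun i => ⇑(E i)) p l = B at *
    have e4 : dS (D i) A - θ D F (E i B) =
        dS (D i) (A - θ D F B) + (dS (D i) (θ D F B) - θ D F (E i B)) := by
      rw [map_sub]; ring
    rw [e4]
    exact e3

noncomputable def ev : MvPolynomial (Fin n) R →+* R := eval F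

lemma ev_I (u : MvPolynomial (Fin n) R) (hu : u ∈ I F) : ev F u = 0 := by
  have : I F ≤ RingHom.ker (ev F) := by
    rw [I, Ideal.span_le]
    rintro _ ⟨j, rfl⟩
    simp [RingHom.mem_ker, ev, G]
  exact this hu

lemma ev_θ (h : TR n) : ev F (θ D F h) = ev0 D F (coeff 0 h) := by
  have : (ev F).comp (θ D F) = (ev0 D F).comp constantCoeff := by
    apply MvPolynomial.ringHom_ext
    · intro z
      simp [θ_C, ev]
    · intro j
      simp [θ_X, ev, G]
  exact congrArg (fun f => f h) this

lemma ev_eq (p : TR n) (m : ℕ) (hp : p ∈ (J : Ideal (TR n)) ^ m) (l : List (Fin n))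
    (h : l.length = m) :
    ev F (l.foldr (fun i => ⇑(dS (D i))) (θ D F p)) =
      ev0 D F (coeff 0 (l.foldr (fun i => ⇑(E i)) p)) := by
  have h1 := (lemC D F m p hp l 0 (by omega)).1
  rw [zero_add, pow_one] at h1
  have := ev_I F _ h1
  rw [map_sub, sub_eq_zero] at this
  rw [this, ev_θ]

lemma ev_zero (p : TR n) (m : ℕ) (hp : p ∈ (J : Ideal (TR n)) ^ m) (l : List (Fin n))
    (h : l.length < m) :
    ev F (l.foldr (fun i => ⇑(dS (D i))) (θ D F p)) = 0 := by
  obtain ⟨k, rfl⟩ := Nat.exists_eq_add_of_lt h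
  obtain ⟨h1, h2⟩ := lemC D F _ p hp l (k + 1) (by omega)
  have h3 := ev_I F _ (Ideal.pow_le_self (by omega) h1)
  have h4 := ev_I F _ (Ideal.pow_le_self (by omega) (θ_Jpow D F _ _ h2))
  rw [map_sub, h4, sub_zero] at h3
  exact h3

/-- The constants of the extended derivations. -/
lemma foldr_lin {κ : Type*} (s : Finset κ) (a : κ → R) (P : κ → MvPolynomial (Fin n) R)
    (hP : ∀ i, ∀ k, dS (D i) (P k) = 0) (l : List (Fin n)) :
    l.foldr (fun i => ⇑(dS (D i))) (∑ k ∈ s, C (a k) * P k) =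
      ∑ k ∈ s, C (l.foldr (fun i => ⇑(D i)) (a k)) * P k := by
  induction l with
  | nil => rfl
  | cons i l ih =>
    simp only [List.foldr_cons, ih, map_sum, Derivation.leibniz, hP, dS_C, smul_eq_mul]
    simp [mul_comm]

noncomputable def P {r : ℕ} (γ β : Fin n → Fin r) : MvPolynomial (Fin n) R :=
  ∏ i, ((-X i) ^ ((β i : ℕ) - (γ i : ℕ)) * ((Nat.choose (β i) (γ i) : ℕ) : MvPolynomial (Fin n) R))

lemma dS_P {r : ℕ} (d : Derivation ℤ R R) (γ β : Fin n → Fin r) : dS d (P γ β) = 0 := by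
  rw [P]
  refine Finset.prod_induction _ (fun x => dS d x = 0) ?_ ?_ ?_
  · intro a b ha hb
    simp [Derivation.leibniz, ha, hb]
  · simp
  · intro i _
    simp [Derivation.leibniz, Derivation.leibniz_pow, dS_X]

lemma prodG {r : ℕ} (β : Fin n → Fin r) :
    ∏ i, G F i ^ (β i : ℕ) = ∑ γ : Fin n → Fin r, C (∏ i, F i ^ (γ i : ℕ)) * P γ β := by
  have h1 : ∀ i, G F i ^ (β i : ℕ) = ∑ k : Fin r, C (F i) ^ (k : ℕ) *
      ((-X i) ^ ((β i : ℕ) - (k : ℕ)) * ((Nat.choose (β i) k : ℕ) : MvPolynomial (Fin n) R)) := by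
    intro i
    rw [G, sub_eq_add_neg, add_pow, Fin.sum_univ_eq_sum_range (fun k => C (F i) ^ (k : ℕ) *
      ((-X i) ^ ((β i : ℕ) - (k : ℕ)) * ((Nat.choose (β i) k : ℕ) : MvPolynomial (Fin n) R))) r]
    rw [← Finset.sum_subset (Finset.range_mono (show (β i : ℕ) + 1 ≤ r from (β i).2))]
    · exact Finset.sum_congr rfl fun k _ => by ring
    · intro k _ hk
      rw [Nat.choose_eq_zero_of_lt (by simpa using hk)]
      simp
  simp_rw [h1]
  rw [Fintype.prod_sum]
  refine Finset.sum_congr rfl fun γ _ => ?_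
  rw [Finset.prod_mul_distrib, P, map_prod]
  simp

lemma det_P {r : ℕ} :
    (Matrix.of fun γ β : Fin n → Fin r => ev F (P γ β)).det = 1 := by
  have h0 : ∀ γ β : Fin n → Fin r, ¬ γ ≤ β → (P γ β : MvPolynomial (Fin n) R) = 0 := by
    intro γ β h
    rw [Pi.le_def, not_forall] at h
    obtain ⟨i, hi⟩ := h
    refine Finset.prod_eq_zero (Finset.mem_univ i) ?_
    rw [Nat.choose_eq_zero_of_lt (by simpa using hi)]
    simp
  have hd : ∀ γ β : Fin n → Fin r, γ ≤ β → deg β ≤ deg γ → γ = β := by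
    intro γ β h h'
    by_contra hne
    obtain ⟨i, hi⟩ := Function.ne_iff.mp hne
    have : deg γ < deg β := Finset.sum_lt_sum (fun i _ => h i)
      ⟨i, Finset.mem_univ _, lt_of_le_of_ne (h i) (by simpa [Fin.ext_iff] using hi)⟩
    omega
  have hb : (Matrix.of fun γ β : Fin n → Fin r => ev F (P γ β)).BlockTriangular deg := by
    intro γ β h
    rw [Matrix.of_apply, h0, map_zero]
    intro hle
    have := hd γ β hle h.le
    subst this
    exact lt_irrefl _ h
  rw [hb.det]
  refine Finset.prod_eq_one fun a _ => ?_
  have : (Matrix.of fun γ β : Fin n → Fin r => ev F (P γ β)).toSquareBlock deg a = 1 := by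
    ext ⟨γ, hγ⟩ ⟨β, hβ⟩
    rw [Matrix.toSquareBlock_def, Matrix.of_apply, Matrix.of_apply, Matrix.one_apply]
    split_ifs with h
    · obtain rfl : γ = β := by simpa using h
      simp [P]
    · rw [h0, map_zero]
      intro hle
      exact h (by simpa using hd γ β hle (by omega))
  rw [this, Matrix.det_one]

end main

lemma det_congr_block {ι A : Type*} [Fintype ι] [DecidableEq ι] [CommRing A] (b : ι → ℕ)
    (M N : Matrix ι ι A) (hM : ∀ i j, b i < b j → M i j = 0) (hN : ∀ i j, b i < b j → N i j = 0)
    (h : ∀ i j, b i = b j → M i j = N i j) : M.det = N.det := by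
  rw [← Matrix.det_transpose M, ← Matrix.det_transpose N]
  have h1 : M.transpose.BlockTriangular b := fun i j hij => hM j i hij
  have h2 : N.transpose.BlockTriangular b := fun i j hij => hN j i hij
  rw [h1.det, h2.det]
  refine Finset.prod_congr rfl fun a _ => ?_
  congr 1
  ext ⟨i, hi⟩ ⟨j, hj⟩
  exact h j i (hj.trans hi.symm)

/-- The monomial `y^β`. -/
noncomputable def yp {n r : ℕ} (β : Fin n → Fin r) : TR n := ∏ j, X j ^ (β j : ℕ)

lemma yp_mem {n r : ℕ} (β : Fin n → Fin r) : yp β ∈ (J : Ideal (TR n)) ^ deg β := by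
  rw [yp, deg, ← Finset.prod_pow_eq_pow_sum]
  exact Ideal.prod_mem_prod fun j _ => Ideal.pow_mem_pow
    (show X j ∈ (J : Ideal (TR n)) from Ideal.subset_span ⟨j, rfl⟩) _

lemma yp_eq {n r : ℕ} (β : Fin n → Fin r) :
    yp β = monomial (Finsupp.equivFunOnFinite.symm fun j => (β j : ℕ)) 1 := by
  rw [monomial_eq, C_1, one_mul, Finsupp.prod_fintype _ _ (by simp)]
  rfl

noncomputable def Hm (n r : ℕ) : Matrix (Fin n → Fin r) (Fin n → Fin r) (ZR n) :=
  Matrix.of fun α β => if deg α = deg β then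
    coeff 0 ((lst α).foldr (fun i => ⇑(E i)) (yp β)) else 0

lemma Hm_homog {n r : ℕ} (α β : Fin n → Fin r) : (Hm n r α β).IsHomogeneous (deg β) := by
  rw [Hm, Matrix.of_apply]
  split_ifs with h
  · rw [yp_eq, ← h, ← lst_length]
    exact E_homog _ _ _
  · exact isHomogeneous_zero _ _ _

lemma sum_deg (n r : ℕ) (hr : 1 ≤ r) :
    ∑ β : Fin n → Fin r, deg β = n * r ^ n * (r - 1) / 2 := by
  have h : ∀ i : Fin n, (∑ β : Fin n → Fin r, (β i : ℕ)) * 2 = r ^ n * (r - 1) := by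
    intro i
    have hrev : ∑ β : Fin n → Fin r, (β i : ℕ) = ∑ β : Fin n → Fin r, ((β i).rev : ℕ) := by
      refine (Equiv.sum_comp (Equiv.arrowCongr (Equiv.refl _) Fin.revPerm)
        (fun β : Fin n → Fin r => (β i : ℕ))).symm.trans ?_
      rfl
    rw [mul_two]
    nth_rewrite 2 [hrev]
    rw [← Finset.sum_add_distrib]
    have : ∀ β : Fin n → Fin r, (β i : ℕ) + ((β i).rev : ℕ) = r - 1 := by
      intro β
      have := (β i).2
      rw [Fin.val_rev]; omega
    rw [Finset.sum_congr rfl fun β _ => this β]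
    simp
  have : (∑ β : Fin n → Fin r, deg β) * 2 = n * r ^ n * (r - 1) := by
    simp only [deg]
    rw [Finset.sum_comm, Finset.sum_mul]
    simp [h, mul_assoc]
  omega

end GW

open GW in
theorem stmt3.{u} (n r : ℕ) (hr : 1 ≤ r) :
    ∃ H : MvPolynomial (Fin n × Fin n) ℤ,
      H.IsHomogeneous (n * r ^ n * (r - 1) / 2) ∧
      ∀ (R : Type u) (_ : CommRing R) (D : Fin n → Derivation ℤ R R),
        (∀ i j : Fin n, ∀ x : R, D i (D j x) = D j (D i x)) →
        ∀ F : Fin n → R,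
          (Matrix.of fun α β : Fin n → Fin r =>
              (List.ofFn fun i : Fin n => (⇑(D i))^[(α i : ℕ)]).foldr (· ∘ ·) id
                (∏ i : Fin n, F i ^ (β i : ℕ))).det =
            MvPolynomial.aeval (fun ij : Fin n × Fin n => D ij.1 (F ij.2)) H := by
  refine ⟨(Hm n r).det, ?_, ?_⟩
  · rw [← sum_deg n r hr, Matrix.det_apply]
    refine IsHomogeneous.sum _ _ _ fun σ _ => ?_
    have h := IsHomogeneous.prod Finset.univ (fun β => Hm n r (σ β) β) deg
      fun β _ => Hm_homog (σ β) β
    rcases Int.units_eq_one_or (Equiv.Perm.sign σ) with hs | hs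
    · rw [hs, one_smul]; exact h
    · rw [hs, Units.neg_smul, one_smul]; exact h.neg
  · intro R _ D _ F
    have hR : MvPolynomial.aeval (fun ij : Fin n × Fin n => D ij.1 (F ij.2)) (Hm n r).det =
        ((ev0 D F).mapMatrix (Hm n r)).det := by
      rw [← RingHom.map_det]; rfl
    rw [hR]
    simp_rw [op_eq (fun i => ⇑(D i))]
    rw [← mul_one (Matrix.det _), ← det_P F (r := r), ← Matrix.det_mul]
    have hV : ∀ α β : Fin n → Fin r,
        ((Matrix.of fun α β : Fin n → Fin r =>
          (lst α).foldr (fun i => ⇑(D i)) (∏ i : Fin n, F i ^ (β i : ℕ))) *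
          (Matrix.of fun γ β : Fin n → Fin r => ev F (P γ β))) α β =
        ev F ((lst α).foldr (fun i => ⇑(dS (D i))) (θ D F (yp β))) := by
      intro α β
      have : θ D F (yp β) = ∏ i, G F i ^ (β i : ℕ) := by
        simp [yp, θ_X]
      rw [this, prodG, foldr_lin D _ _ _ (fun i k => dS_P _ _ _), map_sum, Matrix.mul_apply]
      refine Finset.sum_congr rfl fun γ _ => ?_
      rw [map_mul]
      simp [ev]
    apply det_congr_block deg
    · intro α β h
      rw [hV]
      exact ev_zero D F _ _ (yp_mem β) _ (by rw [lst_length]; exact h)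
    · intro α β h
      simp [Hm, h.ne]
    · intro α β h
      rw [hV, ev_eq D F _ _ (yp_mem β) _ (by rw [lst_length]; exact h)]
      simp [Hm, h]
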